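/- Top-of-queue invariant for the Qlock protocol (invariant inv2): for every state s reachable from the initial state of the Qlock transition system, and for every process identifier i, if pc(s, i) = cs then i is the head (front element) of the queue of s. -/

import Mathlib

/-! The invariant is inductive on its own. Appending to the queue does not change an existing
head, and `tryEnter` is guarded by being at the head. When `j` exits, no other process can be
critical: by the induction hypothesis it would share the head of the queue with `j`. -/

/-- Labels of the Qlock protocol: remainder section, waiting section, critical section. -/
inductive QlockLabel : Type
  | rs | ws | cs
deriving DecidableEq

/-- A state of the Qlock protocol: a program counter assigning a label to each process
identifier, together with a queue of process identifiers. -/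
structure QlockState (Pid : Type*) where
  pc : Pid → QlockLabel
  queue : List Pid

/-- The initial Qlock state: every process is in the remainder section and the queue is
empty. -/
def QlockState.init (Pid : Type*) : QlockState Pid :=
  ⟨fun _ => .rs, []⟩

/-- The transitions of the Qlock protocol. -/
inductive QlockTrans {Pid : Type*} [DecidableEq Pid] : QlockState Pid → QlockState Pid → Prop
  | want (s : QlockState Pid) (i : Pid) (h : s.pc i = .rs) :
      QlockTrans s ⟨Function.update s.pc i .ws, s.queue ++ [i]⟩
  | tryEnter (s : QlockState Pid) (i : Pid) (h : s.pc i = .ws) (hq : s.queue.head? = some i) :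
      QlockTrans s ⟨Function.update s.pc i .cs, s.queue⟩
  | exit (s : QlockState Pid) (i : Pid) (h : s.pc i = .cs) :
      QlockTrans s ⟨Function.update s.pc i .rs, s.queue.tail⟩

/-- Top-of-queue invariant for the Qlock protocol (invariant `inv2`): in every reachable
state, a process in the critical section is at the head of the queue. -/
theorem qlock_top_of_queue {Pid : Type*} [DecidableEq Pid] (s : QlockState Pid)
    (hs : Relation.ReflTransGen QlockTrans (QlockState.init Pid) s)
    (i : Pid) (hi : s.pc i = .cs) : s.queue.head? = some i := by
  induction hs generalizing i with
  | refl => cases hi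
  | tail _ hstep ih =>
    cases hstep with
    | want j h =>
      rcases eq_or_ne i j with rfl | hne
      · simp at hi
      · simp only [Function.update_of_ne hne] at hi
        simp [ih i hi]
    | tryEnter j h hq =>
      rcases eq_or_ne i j with rfl | hne
      · exact hq
      · simp only [Function.update_of_ne hne] at hi
        exact ih i hi
    | exit j h =>
      rcases eq_or_ne i j with rfl | hne
      · simp at hi
      · simp only [Function.update_of_ne hne] at hi
        -- Both `i` and `j` were critical, hence both at the head of the old queue.
        exact absurd (Option.some.inj ((ih i hi).symm.trans (ih j h))) hne
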